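/- For every λ > 0 there exists t > 0 with ∫₀^∞ cos(pt) · p²/(p⁴ + λ⁴) dp < 0; explicitly, at t = π/(√2·λ) this integral equals −(π/(2√2·λ))·e^{−π/2} < 0. -/

import Mathlib

open MeasureTheory Real

open scoped FourierTransform

/-- integrability of `exp (-c|x|)` times an oscillating factor, on the two half lines, and value -/
lemma gpv_exp_abs (c w : ℂ) (hc : 0 < c.re) (hw : w.re = 0) :
    Integrable (fun x : ℝ => Complex.exp (w * x) * Complex.exp (-c * (|x| : ℝ))) ∧
    ∫ x : ℝ, Complex.exp (w * x) * Complex.exp (-c * (|x| : ℝ)) = 2 * c / (c ^ 2 - w ^ 2) := by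
  have h1 : (w - c).re < 0 := by simp [hw, hc]
  have h2 : 0 < (w + c).re := by simp [hw, hc]
  have e1 : Set.EqOn (fun x : ℝ => Complex.exp ((w - c) * x))
      (fun x : ℝ => Complex.exp (w * x) * Complex.exp (-c * (|x| : ℝ))) (Set.Ioi 0) := by
    intro x hx
    have hx' : 0 < x := hx
    simp only [abs_of_pos hx', ← Complex.exp_add]
    congr 1; ring
  have e2 : Set.EqOn (fun x : ℝ => Complex.exp ((w + c) * x))
      (fun x : ℝ => Complex.exp (w * x) * Complex.exp (-c * (|x| : ℝ))) (Set.Iic 0) := by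
    intro x hx
    have hx' : x ≤ 0 := hx
    simp only [abs_of_nonpos hx', ← Complex.exp_add]
    congr 1; push_cast; ring
  have i1 := (integrableOn_exp_mul_complex_Ioi h1 0).congr_fun e1 measurableSet_Ioi
  have i2 := (integrableOn_exp_mul_complex_Iic h2 0).congr_fun e2 measurableSet_Iic
  constructor
  · rw [← integrableOn_univ, ← Set.Iic_union_Ioi (a := (0:ℝ))]
    exact i2.union i1
  · rw [← intervalIntegral.integral_Iic_add_Ioi i2 i1,
      ← setIntegral_congr_fun measurableSet_Ioi e1, ← setIntegral_congr_fun measurableSet_Iic e2,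
      integral_exp_mul_complex_Ioi h1, integral_exp_mul_complex_Iic h2]
    have n1 : w - c ≠ 0 := by intro h; simp [h] at h1
    have n2 : w + c ≠ 0 := by intro h; simp [h] at h2
    have n3 : c ^ 2 - w ^ 2 ≠ 0 := by
      have : c ^ 2 - w ^ 2 = -((w - c) * (w + c)) := by ring
      rw [this]; exact neg_ne_zero.mpr (mul_ne_zero n1 n2)
    simp only [Complex.ofReal_zero, mul_zero, Complex.exp_zero]
    field_simp
    ring

/-- real and imaginary part of the propagator -/
lemma gpv_inv (s p : ℝ) (hs : 0 < s) :
    ((p : ℂ) ^ 2 + s * Complex.I)⁻¹ = ((p ^ 2 / (p ^ 4 + s ^ 2) : ℝ) : ℂ)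
      - ((s / (p ^ 4 + s ^ 2) : ℝ) : ℂ) * Complex.I := by
  have hd : p ^ 4 + s ^ 2 ≠ 0 := by positivity
  have hd' : (p : ℂ) ^ 4 + (s : ℂ) ^ 2 ≠ 0 := by exact_mod_cast hd
  apply inv_eq_of_mul_eq_one_right
  push_cast
  field_simp
  ring_nf
  simp only [Complex.I_sq]
  ring

lemma gpv_integrable (s : ℝ) (hs : 0 < s) :
    Integrable (fun p : ℝ => ((p : ℂ) ^ 2 + s * Complex.I)⁻¹) := by
  have key : ∀ p : ℝ, ‖((p : ℂ) ^ 2 + s * Complex.I)⁻¹‖ ≤ (1 + 1 / s) * (1 + p ^ 2)⁻¹ := by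
    intro p
    have re_le : p ^ 2 ≤ ‖(p : ℂ) ^ 2 + s * Complex.I‖ := by
      have := Complex.re_le_norm ((p : ℂ) ^ 2 + s * Complex.I)
      simpa [← Complex.ofReal_pow] using this
    have im_le : s ≤ ‖(p : ℂ) ^ 2 + s * Complex.I‖ := by
      have := (le_abs_self _).trans (Complex.abs_im_le_norm ((p : ℂ) ^ 2 + s * Complex.I))
      simpa [← Complex.ofReal_pow] using this
    set n := ‖(p : ℂ) ^ 2 + s * Complex.I‖
    have hn : 0 < n := lt_of_lt_of_le hs im_le
    rw [norm_inv]
    change n⁻¹ ≤ _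
    have h1 : 1 ≤ (1 / s) * n := by
      rw [one_div, inv_mul_eq_div, le_div_iff₀ hs]; linarith
    rw [← div_eq_mul_inv, le_div_iff₀ (by positivity), inv_mul_le_iff₀ hn]
    nlinarith
  refine Integrable.mono' (integrable_inv_one_add_sq.const_mul (1 + 1 / s)) ?_
    (Filter.Eventually.of_forall key)
  exact Measurable.aestronglyMeasurable (by fun_prop)

lemma gpv_inversion (a : ℝ) (ha : 0 < a) (t : ℝ) :
    ∫ p : ℝ, Complex.exp (p * t * Complex.I) * ((p : ℂ) ^ 2 + (2 * a ^ 2 : ℝ) * Complex.I)⁻¹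
      = π / (a * (1 + Complex.I)) * Complex.exp (-(a * (1 + Complex.I)) * (|t| : ℝ)) := by
  set c : ℂ := a * (1 + Complex.I) with hcdef
  have hc : 0 < c.re := by simp [hcdef, ha]
  have hc0 : c ≠ 0 := by intro h; simp [h] at hc
  have hc2 : c ^ 2 = (2 * a ^ 2 : ℝ) * Complex.I := by
    rw [hcdef]; push_cast; ring_nf; simp only [Complex.I_sq]; ring
  have hpi : (π : ℂ) ≠ 0 := by exact_mod_cast Real.pi_ne_zero
  let f : ℝ → ℂ := fun x => Complex.exp (-c * (|x| : ℝ))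
  have hF : 𝓕 f = fun v : ℝ => 2 * c * (((2 * π * v : ℝ) : ℂ) ^ 2 + (2 * a ^ 2 : ℝ) * Complex.I)⁻¹ := by
    ext v
    rw [fourier_real_eq_integral_exp_smul]
    have := (gpv_exp_abs c (-(2 * π * v * Complex.I)) hc (by simp)).2
    rw [← hc2, ← div_eq_mul_inv]
    have h2 : c ^ 2 - (-(2 * π * v * Complex.I)) ^ 2 = ((2 * π * v : ℝ) : ℂ) ^ 2 + c ^ 2 := by
      push_cast; ring_nf; simp only [Complex.I_sq]; ring
    rw [h2] at this
    rw [← this]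
    congr 1
    ext x
    simp only [f, smul_eq_mul]
    congr 2
    push_cast; ring
  have hfc : Continuous f := by fun_prop
  have hfi : Integrable f := by
    have := (gpv_exp_abs c 0 hc (by simp)).1
    simpa [f] using this
  have hFi : Integrable (𝓕 f) := by
    rw [hF]
    exact ((gpv_integrable (2 * a ^ 2) (by positivity)).comp_mul_left'
      (by positivity : (2 * π) ≠ 0)).const_mul (2 * c)
  have inv := congrFun (hfc.fourierInv_fourier_eq hfi hFi) t
  rw [Real.fourierInv_eq', hF] at inv
  have hsub := Measure.integral_comp_mul_left (fun p : ℝ => Complex.exp (p * t * Complex.I) *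
    ((p : ℂ) ^ 2 + (2 * a ^ 2 : ℝ) * Complex.I)⁻¹) (2 * π)
  have hL : (2 * c) * ∫ v : ℝ, (fun p : ℝ => Complex.exp (p * t * Complex.I) *
    ((p : ℂ) ^ 2 + (2 * a ^ 2 : ℝ) * Complex.I)⁻¹) (2 * π * v) = f t := by
    rw [← inv, ← integral_const_mul]
    congr 1
    ext v
    simp only [smul_eq_mul]
    have : ((2 * π * v : ℝ) : ℂ) * t * Complex.I
        = ((2 * π * inner ℝ v t : ℝ) : ℂ) * Complex.I := by
      simp; ring
    rw [this]; ring
  rw [hsub, abs_of_pos (by positivity)] at hL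
  change _ = _ * f t
  rw [← hL, Complex.real_smul]
  generalize (∫ p : ℝ, Complex.exp (p * t * Complex.I) *
    ((p : ℂ) ^ 2 + (2 * a ^ 2 : ℝ) * Complex.I)⁻¹) = J
  push_cast
  field_simp

lemma gpv_value (a : ℝ) (ha : 0 < a) (t : ℝ) :
    ∫ p in Set.Ioi (0 : ℝ), Real.cos (p * t) * (p ^ 2 / (p ^ 4 + (2 * a ^ 2) ^ 2))
      = (π / (a * (1 + Complex.I)) * Complex.exp (-(a * (1 + Complex.I)) * (|t| : ℝ))).re / 2 := by
  have h1 := gpv_inversion a ha t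
  have hI := gpv_integrable (2 * a ^ 2) (by positivity)
  have hint : Integrable (fun p : ℝ => Complex.exp (p * t * Complex.I) *
      ((p : ℂ) ^ 2 + (2 * a ^ 2 : ℝ) * Complex.I)⁻¹) := by
    refine hI.bdd_mul (c := 1) (Continuous.aestronglyMeasurable (by fun_prop)) ?_
    refine Filter.Eventually.of_forall fun p => ?_
    rw [← Complex.ofReal_mul, Complex.norm_exp_ofReal_mul_I]
  have hint' : Integrable (fun p : ℝ => Complex.exp (p * (-t : ℝ) * Complex.I) *
      ((p : ℂ) ^ 2 + (2 * a ^ 2 : ℝ) * Complex.I)⁻¹) := by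
    refine hI.bdd_mul (c := 1) (Continuous.aestronglyMeasurable (by fun_prop)) ?_
    refine Filter.Eventually.of_forall fun p => ?_
    rw [← Complex.ofReal_mul, Complex.norm_exp_ofReal_mul_I]
  have h2 := gpv_inversion a ha (-t)
  rw [abs_neg] at h2
  have h3 := integral_add hint hint'
  rw [h1, h2] at h3
  have h4 := congrArg Complex.re h3
  have h5 := integral_re (hint.add hint')
  simp only [RCLike.re_to_complex, Pi.add_apply] at h5
  rw [← h5] at h4
  have h6 : ∀ p : ℝ, (Complex.exp (p * t * Complex.I) *
      ((p : ℂ) ^ 2 + (2 * a ^ 2 : ℝ) * Complex.I)⁻¹ + Complex.exp (p * (-t : ℝ) * Complex.I) *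
      ((p : ℂ) ^ 2 + (2 * a ^ 2 : ℝ) * Complex.I)⁻¹).re =
      2 * (fun q : ℝ => Real.cos (q * t) * (q ^ 2 / (q ^ 4 + (2 * a ^ 2) ^ 2))) |p| := by
    intro p
    have hcos : Real.cos (|p| * t) = Real.cos (p * t) := by
      rcases abs_choice p with h | h <;> rw [h]
      rw [neg_mul, Real.cos_neg]
    have hp4 : |p| ^ 4 = p ^ 4 := by
      rw [show (4 : ℕ) = 2 * 2 from rfl, pow_mul, sq_abs, ← pow_mul]
    have : Complex.exp (p * t * Complex.I) + Complex.exp (p * (-t : ℝ) * Complex.I)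
        = ((2 * Real.cos (p * t) : ℝ) : ℂ) := by
      push_cast
      rw [Complex.cos]
      ring_nf
    rw [← add_mul, this, gpv_inv _ _ (by positivity), Complex.re_ofReal_mul]
    simp only [hcos, hp4, sq_abs, Complex.sub_re, Complex.ofReal_re, Complex.re_ofReal_mul,
      Complex.I_re]
    ring
  simp only [h6] at h4
  rw [integral_const_mul, integral_comp_abs (f := fun q : ℝ =>
    Real.cos (q * t) * (q ^ 2 / (q ^ 4 + (2 * a ^ 2) ^ 2)))] at h4
  rw [Complex.add_re] at h4
  linarith

/-- Positivity violation of the Gribov-type gluon propagator: for every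
`λ > 0` there exists `t > 0` with `∫₀^∞ cos(pt)·p²/(p⁴ + λ⁴) dp < 0`; explicitly, at
`t = π/(√2·λ)` the integral equals `−(π/(2√2·λ))·e^{−π/2} < 0`. -/
theorem gribov_positivity_violation (lam : ℝ) (hlam : 0 < lam) :
    (∫ p in Set.Ioi (0 : ℝ),
          Real.cos (p * (π / (Real.sqrt 2 * lam))) * (p ^ 2 / (p ^ 4 + lam ^ 4))
        = -(π / (2 * Real.sqrt 2 * lam)) * Real.exp (-(π / 2)))
    ∧ ∃ t : ℝ, 0 < t ∧
        (∫ p in Set.Ioi (0 : ℝ), Real.cos (p * t) * (p ^ 2 / (p ^ 4 + lam ^ 4))) < 0 := by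
  have hs2 : (0 : ℝ) < Real.sqrt 2 := by positivity
  have hsq : Real.sqrt 2 ^ 2 = 2 := Real.sq_sqrt (by norm_num)
  have ha : 0 < lam / Real.sqrt 2 := by positivity
  have ht : 0 < π / (Real.sqrt 2 * lam) := by positivity
  have main : ∫ p in Set.Ioi (0 : ℝ),
          Real.cos (p * (π / (Real.sqrt 2 * lam))) * (p ^ 2 / (p ^ 4 + lam ^ 4))
        = -(π / (2 * Real.sqrt 2 * lam)) * Real.exp (-(π / 2)) := by
    have h := gpv_value (lam / Real.sqrt 2) ha (π / (Real.sqrt 2 * lam))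
    have hl : (2 * (lam / Real.sqrt 2) ^ 2) ^ 2 = lam ^ 4 := by
      rw [div_pow, hsq]; ring
    rw [hl] at h
    rw [h, abs_of_pos ht]
    set a := lam / Real.sqrt 2 with hadef
    have hat : a * (π / (Real.sqrt 2 * lam)) = π / 2 := by
      rw [hadef]; field_simp; rw [hsq]
    have hexp : Complex.exp (-((a : ℂ) * (1 + Complex.I)) * ((π / (Real.sqrt 2 * lam) : ℝ) : ℂ))
        = ((Real.exp (-(π / 2)) : ℝ) : ℂ) * (-Complex.I) := by
      have : -((a : ℂ) * (1 + Complex.I)) * ((π / (Real.sqrt 2 * lam) : ℝ) : ℂ)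
          = ((-(π / 2) : ℝ) : ℂ) + -(π / 2 * Complex.I) := by
        have h' : (a : ℂ) * ((π / (Real.sqrt 2 * lam) : ℝ) : ℂ) = ((π / 2 : ℝ) : ℂ) := by
          rw [← Complex.ofReal_mul, hat]
        calc _ = -((a : ℂ) * ((π / (Real.sqrt 2 * lam) : ℝ) : ℂ)) * (1 + Complex.I) := by ring
          _ = _ := by rw [h']; push_cast; ring
      rw [this, Complex.exp_add, Complex.exp_neg (π / 2 * Complex.I), Complex.exp_pi_div_two_mul_I,
        Complex.inv_I, ← Complex.ofReal_exp]
    have hinv : (π : ℂ) / (a * (1 + Complex.I)) = ((π / (2 * a) : ℝ) : ℂ) * (1 - Complex.I) := by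
      have ha' : (a : ℂ) ≠ 0 := by exact_mod_cast ha.ne'
      have hI : (1 : ℂ) + Complex.I ≠ 0 := by
        intro h0
        have := congrArg Complex.re h0
        simp at this
      rw [div_eq_iff (mul_ne_zero ha' hI)]
      push_cast
      field_simp
      ring_nf
      simp only [Complex.I_sq]
      ring
    rw [hexp, hinv]
    have : ((π / (2 * a) : ℝ) : ℂ) * (1 - Complex.I) * (((Real.exp (-(π / 2)) : ℝ) : ℂ) * (-Complex.I))
        = ((π / (2 * a) * Real.exp (-(π / 2)) : ℝ) : ℂ) * (-1 - Complex.I) := by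
      push_cast
      ring_nf
      simp only [Complex.I_sq]
      ring
    rw [this, Complex.re_ofReal_mul, hadef]
    simp only [Complex.sub_re, Complex.neg_re, Complex.one_re, Complex.I_re]
    field_simp
    rw [hsq]
    ring
  refine ⟨main, _, ht, ?_⟩
  rw [main, neg_mul]
  exact neg_neg_of_pos (by positivity)
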